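/- Decomposition of the mixer unitary into single-qubit rotations: for every n ≥ 1 and every real β, Matrix.exp(−(I*β/2) • ∑_{i : Fin n} X i) = ∏_{i : Fin n} (Real.cos(β/2) • 1 − (I * Real.sin(β/2)) • X i), i.e., the exponential of the mixer Hamiltonian factors as a product of Rx(β) rotation gates acting on each qubit. -/

import Mathlib

open Complex Matrix

/-- Pauli-X on qubit `i` of `n` qubits. -/
def PauliX (n : ℕ) (i : Fin n) : Matrix (Fin n → Fin 2) (Fin n → Fin 2) ℂ :=
  fun x y => if (∀ j, j ≠ i → x j = y j) ∧ x i ≠ y i then 1 else 0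

/-- Pauli-Z on qubit `i` of `n` qubits. -/
def PauliZ (n : ℕ) (i : Fin n) : Matrix (Fin n → Fin 2) (Fin n → Fin 2) ℂ :=
  Matrix.diagonal fun x => (-1 : ℂ) ^ (x i : ℕ)

/-- Flip bit `i` of a bit string. -/
def bitFlip (n : ℕ) (i : Fin n) (x : Fin n → Fin 2) : Fin n → Fin 2 :=
  Function.update x i (x i + 1)

lemma pauliX_cond_iff (n : ℕ) (i : Fin n) (x y : Fin n → Fin 2) :
    ((∀ j, j ≠ i → x j = y j) ∧ x i ≠ y i) ↔ y = bitFlip n i x := by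
  constructor
  · rintro ⟨h1, h2⟩
    funext j
    by_cases hj : j = i
    · subst hj
      simp only [bitFlip, Function.update_self]
      revert h2
      generalize x j = a; generalize y j = b
      revert a b; decide
    · rw [bitFlip, Function.update_of_ne hj]
      exact (h1 j hj).symm
  · rintro rfl
    refine ⟨fun j hj => ?_, ?_⟩
    · rw [bitFlip, Function.update_of_ne hj]
    · simp only [bitFlip, Function.update_self]
      generalize x i = a
      revert a; decide

lemma pauliX_eq (n : ℕ) (i : Fin n) :
    PauliX n i = fun x y => if y = bitFlip n i x then 1 else 0 := by
  funext x y
  rw [PauliX, if_congr (pauliX_cond_iff n i x y) rfl rfl]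

lemma pauliX_mul_pauliX (n : ℕ) (i j : Fin n) :
    PauliX n i * PauliX n j
      = fun x y => if y = bitFlip n j (bitFlip n i x) then 1 else 0 := by
  funext x y
  simp only [Matrix.mul_apply]
  rw [pauliX_eq, pauliX_eq]
  beta_reduce
  rw [Finset.sum_eq_single (bitFlip n i x)]
  · simp
  · intro z _ hz
    rw [if_neg hz, zero_mul]
  · intro h; exact absurd (Finset.mem_univ _) h

lemma bitFlip_comm (n : ℕ) (i j : Fin n) (x : Fin n → Fin 2) :
    bitFlip n j (bitFlip n i x) = bitFlip n i (bitFlip n j x) := by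
  rcases eq_or_ne i j with rfl | h
  · rfl
  · simp only [bitFlip, Function.update_of_ne h, Function.update_of_ne (Ne.symm h),
      Function.update_self]
    exact Function.update_comm h _ _ x

lemma pauliX_commute (n : ℕ) (i j : Fin n) : Commute (PauliX n i) (PauliX n j) := by
  show _ * _ = _ * _
  rw [pauliX_mul_pauliX, pauliX_mul_pauliX]
  funext x y
  rw [bitFlip_comm]

lemma pauliZ_commute (n : ℕ) (i j : Fin n) : Commute (PauliZ n i) (PauliZ n j) := by
  show _ * _ = _ * _
  simp only [PauliZ, Matrix.diagonal_mul_diagonal]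
  have h : (fun x : Fin n → Fin 2 => (-1 : ℂ) ^ (x i : ℕ) * (-1) ^ (x j : ℕ))
      = fun x : Fin n → Fin 2 => (-1 : ℂ) ^ (x j : ℕ) * (-1) ^ (x i : ℕ) := by
    funext x; ring
  rw [h]

/-- The flip-all operator `∏ i, X i`. -/
def flipAll (n : ℕ) : Matrix (Fin n → Fin 2) (Fin n → Fin 2) ℂ :=
  Finset.univ.noncommProd (PauliX n) fun a _ b _ _ => pauliX_commute n a b

/-- The parity operator `∏ i ∈ S, Z i`. -/
def ZProd (n : ℕ) (S : Finset (Fin n)) : Matrix (Fin n → Fin 2) (Fin n → Fin 2) ℂ :=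
  S.noncommProd (PauliZ n) fun a _ b _ _ => pauliZ_commute n a b

/-- The uniform superposition state. -/
noncomputable def psiPlus (n : ℕ) : (Fin n → Fin 2) → ℂ :=
  fun _ => (((Real.sqrt 2)⁻¹ : ℝ) : ℂ) ^ n

/-- The rotation gate `Rx(β)` on qubit `i`: `cos(β/2) • 1 - i sin(β/2) • X i`. -/
noncomputable def RxGate (n : ℕ) (β : ℝ) (i : Fin n) :
    Matrix (Fin n → Fin 2) (Fin n → Fin 2) ℂ :=
  (Real.cos (β / 2) : ℂ) • 1 - (Complex.I * (Real.sin (β / 2) : ℂ)) • PauliX n i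

lemma RxGate_commute (n : ℕ) (β : ℝ) (i j : Fin n) :
    Commute (RxGate n β i) (RxGate n β j) :=
  (((Commute.one_left _).smul_left _).sub_left
    ((((Commute.one_right _).smul_right _).sub_right
      ((pauliX_commute n i j).smul_right _)).smul_left _))

lemma pauliX_sq (n : ℕ) (i : Fin n) : PauliX n i * PauliX n i = 1 := by
  rw [pauliX_mul_pauliX]
  have hf : ∀ x, bitFlip n i (bitFlip n i x) = x := by
    intro x
    simp only [bitFlip, Function.update_self, Function.update_idem]
    have : x i + 1 + 1 = x i := by generalize x i = a; revert a; decide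
    rw [this, Function.update_eq_self]
  funext x y
  rw [hf, Matrix.one_apply]
  simp only [eq_comm]

lemma exp_smul_involution {m : Type*} [Fintype m] [DecidableEq m] (c : ℂ) {A : Matrix m m ℂ}
    (hA : A * A = 1) :
    NormedSpace.exp (c • A) = Complex.cosh c • (1 : Matrix m m ℂ) + Complex.sinh c • A := by
  rw [NormedSpace.exp_eq_tsum ℂ]
  refine HasSum.tsum_eq (HasSum.even_add_odd ?_ ?_)
  · convert (Complex.hasSum_cosh c).smul_const (1 : Matrix m m ℂ) using 2 with k
    · rfl
    rw [smul_pow, pow_mul A, pow_two A, hA, one_pow, smul_smul, div_eq_inv_mul]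
  · convert (Complex.hasSum_sinh c).smul_const A using 2 with k
    · rfl
    rw [smul_pow, pow_succ A, pow_mul A, pow_two A, hA, one_pow, one_mul, smul_smul, div_eq_inv_mul]

/-- **Decomposition of the mixer unitary into single-qubit rotations**:
`exp(-(iβ/2) ∑ X i) = ∏ Rx(β) i`. -/
theorem exp_mixer_eq_prod_Rx (n : ℕ) (hn : 1 ≤ n) (β : ℝ) :
    NormedSpace.exp ((-(Complex.I * (β : ℂ) / 2)) • ∑ i, PauliX n i)
      = Finset.univ.noncommProd (RxGate n β) (fun a _ b _ _ => RxGate_commute n β a b) := by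
  have h := Matrix.exp_sum_of_commute Finset.univ
    (fun i => (-(Complex.I * (β : ℂ) / 2)) • PauliX n i)
    (fun a _ b _ _ => ((pauliX_commute n a b).smul_left _).smul_right _)
  rw [← Finset.smul_sum] at h
  rw [h]
  refine Finset.noncommProd_congr rfl (fun i _ => ?_) _
  rw [exp_smul_involution _ (pauliX_sq n i), RxGate]
  have e : -(Complex.I * (β : ℂ) / 2) = ((-(β / 2 : ℂ)) * Complex.I) := by ring
  rw [e, Complex.cosh_mul_I, Complex.sinh_mul_I, Complex.cos_neg, Complex.sin_neg, sub_eq_add_neg,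
    ← neg_smul]
  push_cast
  congr 2
  ring
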